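/- Let d, n₁, m₁ be positive integers with gcd(n₁, m₁) = 1, set n = d·n₁ and m = d·m₁, and assume n ≥ 2m. Consider f(X) = X^n + X^m + 1 ∈ ℤ[X]. If n₁ + m₁ ≢ 0 (mod 3), then f is irreducible in ℤ[X]. If n₁ + m₁ ≡ 0 (mod 3), then there exists g ∈ ℤ[X] such that f(X) = (X^{2d} + X^d + 1)·g and either g = 1 or g is irreducible in ℤ[X]. -/

import Mathlib

open Polynomial

/-!
Let `n = d * n₁`, `m = d * m₁`, `f = X ^ n + X ^ m + 1`, and let `X ^ n + X ^ (n - m) + 1` be its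
reciprocal `f.mirror`. At a common zero `x` of the two, `x ^ m = x ^ (n - m)` is a zero `z` of
`X ^ 2 + X + 1`, so `x ^ n = z ^ 2` and, as `n₁` and `m₁` are coprime, `x ^ d` is a cube root of
unity. Hence `f` and `f.mirror` share exactly the zeros of `X ^ (2 * d) + X ^ d + 1` if
`3 ∣ n₁ + m₁`, and none otherwise. These zeros are simple, because `X * f'` takes the value
`z * (n * z + m)` there and the resultant `n ^ 2 - n * m + m ^ 2` of `n * Z + m` and `Z ^ 2 + Z + 1`
is nonzero.

A unit trinomial `p` is determined up to sign and reciprocation by `p * p.mirror`, and this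
property passes to the cofactor `g` of a self-reciprocal factor. A factorization `g = a * b` gives
the competitor `a * b.mirror`, which forces `a` or `b` to divide both `g` and `g.mirror`. A common
divisor of these divides `X ^ (2 * d) + X ^ d + 1` too, so its square divides `f`, and it is a unit.

The arguments about zeros are carried out for the class of `X` in `ℤ[X] ⧸ (c)`, where `c` is a
common divisor; as this may be any commutative ring, they cover constant divisors as well.
-/

section UnitTrinomial

theorem natDegree_eq_of_mul_mirror_eq {R : Type*} [Semiring R] [NoZeroDivisors R] {p q : R[X]}
    (h : p * p.mirror = q * q.mirror) : p.natDegree = q.natDegree := by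
  have := congrArg natDegree h
  rw [natDegree_mul_mirror, natDegree_mul_mirror] at this
  omega

theorem natTrailingDegree_eq_of_mul_mirror_eq {R : Type*} [Semiring R] [NoZeroDivisors R]
    {p q : R[X]} (h : p * p.mirror = q * q.mirror) :
    p.natTrailingDegree = q.natTrailingDegree := by
  have := congrArg natTrailingDegree h
  rw [natTrailingDegree_mul_mirror, natTrailingDegree_mul_mirror] at this
  omega

theorem eq_or_neg_or_mirror_of_mul_mirror_eq {p q : ℤ[X]} (hp : p.IsUnitTrinomial)
    (h : p * p.mirror = q * q.mirror) :
    q = p ∨ q = -p ∨ q = p.mirror ∨ q = -p.mirror := by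
  have hq : q.IsUnitTrinomial := (isUnitTrinomial_iff'' h).mp hp
  obtain ⟨k, m, n, hkm, hmn, u, v, w, hp⟩ := hp
  obtain ⟨k', m', n', hkm', hmn', x, y, z, hq⟩ := hq
  obtain rfl : k = k' := by
    simpa only [hp, hq, trinomial_natTrailingDegree hkm hmn u.ne_zero,
      trinomial_natTrailingDegree hkm' hmn' x.ne_zero]
      using natTrailingDegree_eq_of_mul_mirror_eq h
  obtain rfl : n = n' := by
    simpa only [hp, hq, trinomial_natDegree hkm hmn w.ne_zero,
      trinomial_natDegree hkm' hmn' z.ne_zero] using natDegree_eq_of_mul_mirror_eq h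
  rcases eq_or_ne y v with rfl | hyv
  · have := IsUnitTrinomial.irreducible_aux3 hkm hmn hkm' hmn' u y w x z hp hq h
    tauto
  · obtain rfl := Int.units_ne_iff_eq_neg.mp hyv
    have hq_neg : -q = trinomial k m' n ((-x : ℤˣ) : ℤ) v (-z : ℤˣ) := by
      rw [hq, trinomial_def, trinomial_def]
      simp only [Units.val_neg, map_neg]
      ring
    have h_neg : p * p.mirror = -q * (-q).mirror := by rw [h, mirror_neg, neg_mul_neg]
    have := IsUnitTrinomial.irreducible_aux3 hkm hmn hkm' hmn' u v w (-x) (-z) hp hq_neg h_neg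
    rw [neg_eq_iff_eq_neg, neg_eq_iff_eq_neg] at this
    tauto

theorem irreducible_of_isUnitTrinomial_mul {c g : ℤ[X]} (hcg : (c * g).IsUnitTrinomial)
    (hc : c.mirror = c) (hg : ¬IsUnit g) (hrel : IsRelPrime g g.mirror) : Irreducible g := by
  have hc0 : c ≠ 0 := left_ne_zero_of_mul hcg.ne_zero
  refine irreducible_of_mirror hg (fun k hk ↦ ?_) hrel
  have hck : c * g * (c * g).mirror = c * k * (c * k).mirror := by
    rw [mirror_mul_of_domain, mirror_mul_of_domain, mul_mul_mul_comm, hk, mul_mul_mul_comm]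
  have := eq_or_neg_or_mirror_of_mul_mirror_eq hcg hck
  rwa [mirror_mul_of_domain, hc, ← mul_neg, ← mul_neg, mul_right_inj' hc0, mul_right_inj' hc0,
    mul_right_inj' hc0, mul_right_inj' hc0] at this

end UnitTrinomial

section CommonZeros

variable {R : Type*} [CommRing R] {x : R} {n m : ℕ}

theorem pow_three_eq_one_of_sq_add_self_add_one_eq_zero (hx : x ^ 2 + x + 1 = 0) : x ^ 3 = 1 := by
  linear_combination (x - 1) * hx

theorem pow_eq_sq_of_common_zero (hmn : m ≤ n) (h : x ^ n + x ^ m + 1 = 0)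
    (h' : x ^ n + x ^ (n - m) + 1 = 0) : x ^ n = (x ^ m) ^ 2 := by
  have hpow : x ^ (n - m) = x ^ m := by linear_combination h' - h
  rw [← pow_mul_pow_sub x hmn, hpow, sq]

theorem pow_three_eq_one_of_common_zero (hmn : m ≤ n) (hcop : n.Coprime m)
    (h : x ^ n + x ^ m + 1 = 0) (h' : x ^ n + x ^ (n - m) + 1 = 0) : x ^ 3 = 1 := by
  have hn := pow_eq_sq_of_common_zero hmn h h'
  have hm : (x ^ m) ^ 3 = 1 := pow_three_eq_one_of_sq_add_self_add_one_eq_zero (hn ▸ h)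
  have hm3 : (x ^ 3) ^ m = 1 := by rw [pow_right_comm, hm]
  have hn3 : (x ^ 3) ^ n = 1 := by rw [pow_right_comm, hn, pow_right_comm, hm, one_pow]
  simpa only [hcop.gcd_eq_one, pow_one] using pow_gcd_eq_one.mpr ⟨hn3, hm3⟩

theorem three_eq_zero_of_common_zero (hmn : m ≤ n) (hcop : n.Coprime m) (h3 : ¬3 ∣ n + m)
    (h : x ^ n + x ^ m + 1 = 0) (h' : x ^ n + x ^ (n - m) + 1 = 0) : (3 : R) = 0 := by
  have hn := pow_eq_sq_of_common_zero hmn h h'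
  have hm : (x ^ m) ^ 3 = 1 := pow_three_eq_one_of_sq_add_self_add_one_eq_zero (hn ▸ h)
  have hsum : x ^ (n + m) = 1 := by rw [pow_add, hn, ← pow_succ, hm]
  have hcop3 : Nat.gcd 3 (n + m) = 1 := (Nat.prime_three.coprime_iff_not_dvd).mpr h3
  have hx : x = 1 := by
    simpa only [hcop3, pow_one] using
      pow_gcd_eq_one.mpr ⟨pow_three_eq_one_of_common_zero hmn hcop h h', hsum⟩
  subst hx
  linear_combination h

theorem not_three_dvd_of_coprime_of_three_dvd_add (hcop : n.Coprime m) (h3 : 3 ∣ n + m) :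
    ¬3 ∣ m := fun hm ↦
  Nat.not_coprime_of_dvd_of_dvd (by norm_num) ((Nat.dvd_add_left hm).mp h3) hm hcop

theorem pow_sq_add_pow_add_one {k : ℕ} (hx : x ^ 3 = 1) (hk : ¬3 ∣ k) :
    (x ^ k) ^ 2 + x ^ k + 1 = x ^ 2 + x + 1 := by
  have hk' : k % 3 = 1 ∨ k % 3 = 2 := by omega
  rw [pow_eq_pow_mod k hx]
  rcases hk' with hk' | hk' <;> rw [hk']
  · ring
  · linear_combination x * hx

theorem sq_add_self_add_one_eq_zero_of_common_zero (hmn : m ≤ n) (hcop : n.Coprime m)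
    (h3 : 3 ∣ n + m) (h : x ^ n + x ^ m + 1 = 0) (h' : x ^ n + x ^ (n - m) + 1 = 0) :
    x ^ 2 + x + 1 = 0 := by
  rw [← pow_sq_add_pow_add_one (pow_three_eq_one_of_common_zero hmn hcop h h')
    (not_three_dvd_of_coprime_of_three_dvd_add hcop h3), ← pow_eq_sq_of_common_zero hmn h h', h]

theorem pow_add_pow_add_one_eq_zero (hcop : n.Coprime m) (h3 : 3 ∣ n + m)
    (hx : x ^ 2 + x + 1 = 0) : x ^ n + x ^ m + 1 = 0 := by
  have hx3 := pow_three_eq_one_of_sq_add_self_add_one_eq_zero hx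
  have hn : x ^ n = (x ^ m) ^ 2 := by
    rw [← pow_mul, pow_eq_pow_mod n hx3, pow_eq_pow_mod (m * 2) hx3,
      show n % 3 = m * 2 % 3 by omega]
  rw [hn, pow_sq_add_pow_add_one hx3 (not_three_dvd_of_coprime_of_three_dvd_add hcop h3), hx]

theorem sq_sub_mul_add_sq_eq_zero_of_common_double_zero (hmn : m ≤ n) (h : x ^ n + x ^ m + 1 = 0)
    (h' : x ^ n + x ^ (n - m) + 1 = 0) (hder : n * x ^ n + m * x ^ m = 0) :
    (n : R) ^ 2 - n * m + m ^ 2 = 0 := by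
  have hn := pow_eq_sq_of_common_zero hmn h h'
  rw [hn] at h hder
  have hz : x ^ m * (x ^ m) ^ 2 = 1 := by
    linear_combination pow_three_eq_one_of_sq_add_self_add_one_eq_zero h
  have hlin : n * x ^ m + m = 0 := by
    linear_combination (x ^ m) ^ 2 * hder - (n * x ^ m + m) * hz
  linear_combination (n : R) ^ 2 * h + (m - n - n * x ^ m) * hlin

end CommonZeros

section CommonDivisors

variable {R : Type*} [CommRing R] {c : R[X]} {d n m : ℕ}

theorem dvd_three_of_common_dvd (hmn : m ≤ n) (hcop : n.Coprime m) (h3 : ¬3 ∣ n + m)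
    (h : c ∣ X ^ (d * n) + X ^ (d * m) + 1)
    (h' : c ∣ X ^ (d * n) + X ^ (d * n - d * m) + 1) : c ∣ 3 := by
  rw [← AdjoinRoot.mk_eq_zero] at *
  simp only [← Nat.mul_sub, map_add, map_pow, map_one, map_ofNat, AdjoinRoot.mk_X, pow_mul] at *
  exact three_eq_zero_of_common_zero hmn hcop h3 h h'

theorem dvd_X_pow_add_X_pow_add_one_of_common_dvd (hmn : m ≤ n) (hcop : n.Coprime m)
    (h3 : 3 ∣ n + m) (h : c ∣ X ^ (d * n) + X ^ (d * m) + 1)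
    (h' : c ∣ X ^ (d * n) + X ^ (d * n - d * m) + 1) : c ∣ X ^ (2 * d) + X ^ d + 1 := by
  rw [← AdjoinRoot.mk_eq_zero] at *
  simp only [← Nat.mul_sub, mul_comm 2, map_add, map_pow, map_one, AdjoinRoot.mk_X, pow_mul] at *
  exact sq_add_self_add_one_eq_zero_of_common_zero hmn hcop h3 h h'

theorem X_pow_add_X_pow_add_one_dvd (hcop : n.Coprime m) (h3 : 3 ∣ n + m) :
    (X ^ (2 * d) + X ^ d + 1 : R[X]) ∣ X ^ (d * n) + X ^ (d * m) + 1 := by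
  have hroot := AdjoinRoot.mk_eq_zero.mpr (dvd_refl (X ^ (2 * d) + X ^ d + 1 : R[X]))
  rw [← AdjoinRoot.mk_eq_zero]
  simp only [mul_comm 2, map_add, map_pow, map_one, AdjoinRoot.mk_X, pow_mul] at *
  exact pow_add_pow_add_one_eq_zero hcop h3 hroot

theorem dvd_C_sq_sub_mul_add_sq_of_sq_dvd (hmn : m ≤ n) (h : c ^ 2 ∣ X ^ n + X ^ m + 1)
    (h' : c ∣ X ^ n + X ^ (n - m) + 1) : c ∣ C ((n : R) ^ 2 - n * m + m ^ 2) := by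
  have hder : c ∣ X * derivative (X ^ n + X ^ m + 1) := by
    simpa only [Nat.add_one_sub_one, pow_one] using
      (pow_sub_one_dvd_derivative_of_pow_dvd h).mul_left X
  have hX_mul_derivative (k : ℕ) : X * derivative (X ^ k : R[X]) = C (k : R) * X ^ k := by
    cases k with
    | zero => simp
    | succ k => rw [derivative_X_pow_succ, pow_succ]; push_cast; ring
  have hf := (dvd_pow_self c two_ne_zero).trans h
  simp only [mul_add, derivative_add, derivative_one, add_zero, hX_mul_derivative,
    map_natCast] at hder
  rw [← AdjoinRoot.mk_eq_zero] at *
  simp only [map_add, map_sub, map_mul, map_pow, map_one, map_natCast, AdjoinRoot.mk_X] at *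
  exact sq_sub_mul_add_sq_eq_zero_of_common_double_zero hmn hf h' hder

end CommonDivisors

section Trinomial

variable {n m : ℕ}

theorem isUnit_of_dvd_monic_of_dvd_C {R : Type*} [CommRing R] [IsDomain R] {c f : R[X]} {a : R}
    (hf : f.Monic) (ha : a ≠ 0) (hcf : c ∣ f) (hca : c ∣ C a) : IsUnit c := by
  have hdeg : c.natDegree = 0 := by
    simpa only [natDegree_C, Nat.le_zero] using natDegree_le_of_dvd hca (C_ne_zero.mpr ha)
  obtain ⟨r, rfl⟩ := natDegree_eq_zero.mp hdeg
  exact isUnit_C.mpr (hf.isPrimitive r hcf)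

theorem X_pow_add_X_pow_add_one_eq_trinomial {R : Type*} [Semiring R] :
    (X : R[X]) ^ n + X ^ m + 1 = trinomial 0 m n 1 1 1 := by
  simp only [trinomial_def, map_one, one_mul, pow_zero]
  abel

theorem monic_X_pow_add_X_pow_add_one {R : Type*} [Semiring R] (hm : 0 < m) (hmn : m < n) :
    ((X : R[X]) ^ n + X ^ m + 1).Monic := by
  rw [X_pow_add_X_pow_add_one_eq_trinomial]
  exact trinomial_monic hm hmn

theorem mirror_X_pow_add_X_pow_add_one {R : Type*} [Semiring R] [Nontrivial R] (hm : 0 < m)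
    (hmn : m < n) : ((X : R[X]) ^ n + X ^ m + 1).mirror = X ^ n + X ^ (n - m) + 1 := by
  rw [X_pow_add_X_pow_add_one_eq_trinomial, X_pow_add_X_pow_add_one_eq_trinomial,
    trinomial_mirror hm hmn one_ne_zero one_ne_zero, add_zero]

theorem isUnitTrinomial_X_pow_add_X_pow_add_one (hm : 0 < m) (hmn : m < n) :
    ((X : ℤ[X]) ^ n + X ^ m + 1).IsUnitTrinomial :=
  ⟨0, m, n, hm, hmn, 1, 1, 1, X_pow_add_X_pow_add_one_eq_trinomial⟩

theorem isUnit_of_sq_dvd_of_dvd_mirror {c : ℤ[X]} (hm : 0 < m) (hmn : m < n)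
    (h : c ^ 2 ∣ X ^ n + X ^ m + 1) (h' : c ∣ (X ^ n + X ^ m + 1 : ℤ[X]).mirror) : IsUnit c := by
  rw [mirror_X_pow_add_X_pow_add_one hm hmn] at h'
  have hres : (n : ℤ) ^ 2 - n * m + m ^ 2 ≠ 0 := by
    have : (0 : ℤ) < m := by exact_mod_cast hm
    nlinarith [sq_nonneg (2 * n - m : ℤ)]
  exact isUnit_of_dvd_monic_of_dvd_C (monic_X_pow_add_X_pow_add_one hm hmn) hres
    ((dvd_pow_self c two_ne_zero).trans h) (dvd_C_sq_sub_mul_add_sq_of_sq_dvd hmn.le h h')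

end Trinomial

section Ljunggren

variable {d n m : ℕ}

theorem irreducible_X_pow_add_X_pow_add_one (hd : 0 < d) (hm : 0 < m) (hmn : m < n)
    (hcop : n.Coprime m) (h3 : ¬3 ∣ n + m) :
    Irreducible ((X : ℤ[X]) ^ (d * n) + X ^ (d * m) + 1) := by
  have hdm : 0 < d * m := Nat.mul_pos hd hm
  have hdmn : d * m < d * n := Nat.mul_lt_mul_of_pos_left hmn hd
  refine (isUnitTrinomial_X_pow_add_X_pow_add_one hdm hdmn).irreducible_of_coprime
    fun c hc hc' ↦ ?_
  rw [mirror_X_pow_add_X_pow_add_one hdm hdmn] at hc'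
  exact isUnit_of_dvd_monic_of_dvd_C (monic_X_pow_add_X_pow_add_one hdm hdmn) three_ne_zero hc
    (dvd_three_of_common_dvd hmn.le hcop h3 hc hc')

theorem isRelPrime_mirror_of_X_pow_add_X_pow_add_one_eq_mul {g : ℤ[X]} (hd : 0 < d) (hm : 0 < m)
    (hmn : m < n) (hcop : n.Coprime m) (h3 : 3 ∣ n + m)
    (hg : X ^ (d * n) + X ^ (d * m) + 1 = (X ^ (2 * d) + X ^ d + 1) * g) :
    IsRelPrime g g.mirror := by
  have hdm : 0 < d * m := Nat.mul_pos hd hm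
  have hdmn : d * m < d * n := Nat.mul_lt_mul_of_pos_left hmn hd
  intro c hc hc'
  have hcf : c ∣ X ^ (d * n) + X ^ (d * m) + 1 := hg ▸ hc.mul_left _
  have hcf' : c ∣ (X ^ (d * n) + X ^ (d * m) + 1 : ℤ[X]).mirror := by
    rw [hg, mirror_mul_of_domain]
    exact hc'.mul_left _
  have hcΦ : c ∣ X ^ (2 * d) + X ^ d + 1 :=
    dvd_X_pow_add_X_pow_add_one_of_common_dvd hmn.le hcop h3 hcf
      (by rwa [mirror_X_pow_add_X_pow_add_one hdm hdmn] at hcf')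
  have hsq : c ^ 2 ∣ X ^ (d * n) + X ^ (d * m) + 1 := by
    rw [hg, sq]
    exact mul_dvd_mul hcΦ hc
  exact isUnit_of_sq_dvd_of_dvd_mirror hdm hdmn hsq hcf'

theorem eq_one_or_irreducible_of_X_pow_add_X_pow_add_one_eq_mul {g : ℤ[X]} (hd : 0 < d)
    (hm : 0 < m) (hmn : m < n) (hcop : n.Coprime m) (h3 : 3 ∣ n + m)
    (hg : X ^ (d * n) + X ^ (d * m) + 1 = (X ^ (2 * d) + X ^ d + 1) * g) :
    g = 1 ∨ Irreducible g := by
  have hdm : 0 < d * m := Nat.mul_pos hd hm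
  have hdmn : d * m < d * n := Nat.mul_lt_mul_of_pos_left hmn hd
  have hd2 : d < 2 * d := by omega
  have hgmon : g.Monic := (monic_X_pow_add_X_pow_add_one hd hd2).of_mul_monic_left
    (hg ▸ monic_X_pow_add_X_pow_add_one hdm hdmn)
  have hself : (X ^ (2 * d) + X ^ d + 1 : ℤ[X]).mirror = X ^ (2 * d) + X ^ d + 1 := by
    rw [mirror_X_pow_add_X_pow_add_one hd hd2, two_mul, Nat.add_sub_cancel]
  refine or_iff_not_imp_left.mpr fun hg1 ↦ ?_
  exact irreducible_of_isUnitTrinomial_mul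
    (hg ▸ isUnitTrinomial_X_pow_add_X_pow_add_one hdm hdmn) hself
    (mt hgmon.eq_one_of_isUnit hg1)
    (isRelPrime_mirror_of_X_pow_add_X_pow_add_one_eq_mul hd hm hmn hcop h3 hg)

theorem ljunggren_trinomial_general (hd : 0 < d) (hm : 0 < m) (hmn : m < n)
    (hcop : n.Coprime m) :
    (¬3 ∣ n + m → Irreducible ((X : ℤ[X]) ^ (d * n) + X ^ (d * m) + 1)) ∧
    (3 ∣ n + m → ∃ g : ℤ[X],
      (X : ℤ[X]) ^ (d * n) + X ^ (d * m) + 1 = (X ^ (2 * d) + X ^ d + 1) * g ∧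
      (g = 1 ∨ Irreducible g)) := by
  refine ⟨irreducible_X_pow_add_X_pow_add_one hd hm hmn hcop, fun h3 ↦ ?_⟩
  obtain ⟨g, hg⟩ := X_pow_add_X_pow_add_one_dvd (R := ℤ) (d := d) hcop h3
  exact ⟨g, hg, eq_one_or_irreducible_of_X_pow_add_X_pow_add_one_eq_mul hd hm hmn hcop h3 hg⟩

end Ljunggren

/-- Ljunggren's theorem for `X^n + X^m + 1`. -/
theorem ljunggren_trinomial (d n₁ m₁ : ℕ) (hd : 0 < d) (hn₁ : 0 < n₁) (hm₁ : 0 < m₁)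
    (hcop : Nat.gcd n₁ m₁ = 1) (n m : ℕ) (hn : n = d * n₁) (hm : m = d * m₁)
    (hnm : 2 * m ≤ n) :
    ((n₁ + m₁) % 3 ≠ 0 →
      Irreducible ((X : Polynomial ℤ) ^ n + X ^ m + 1)) ∧
    ((n₁ + m₁) % 3 = 0 →
      ∃ g : Polynomial ℤ,
        (X : Polynomial ℤ) ^ n + X ^ m + 1 = (X ^ (2 * d) + X ^ d + 1) * g ∧
        (g = 1 ∨ Irreducible g)) := by
  subst hn hm
  have hlt : m₁ < n₁ := by nlinarith
  simpa only [ne_eq, ← Nat.dvd_iff_mod_eq_zero] using ljunggren_trinomial_general hd hm₁ hlt hcop
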